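/- There is no non-trivial 3-dimensional Hopf superalgebra over K: every 3-dimensional Hopf superalgebra A = A₀ ⊕ A₁ over K has trivial odd part, A₁ = {0}. -/

import Mathlib

open TensorProduct

section SuperDefs

variable (K A : Type*) [Field K] [Ring A] [Algebra K A]

/-- A superalgebra structure on the unital associative `K`-algebra `A`: a `ℤ/2ℤ`-grading
`A = A₀ ⊕ A₁` of `K`-vector spaces with `1 ∈ A₀` and `Aᵢ · Aⱼ ⊆ A_{i+j mod 2}`. -/
structure SuperAlgebra where
  A₀ : Submodule K A
  A₁ : Submodule K A
  compl : IsCompl A₀ A₁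
  one_mem : (1 : A) ∈ A₀
  mul_mem₀₀ : ∀ a ∈ A₀, ∀ b ∈ A₀, a * b ∈ A₀
  mul_mem₀₁ : ∀ a ∈ A₀, ∀ b ∈ A₁, a * b ∈ A₁
  mul_mem₁₀ : ∀ a ∈ A₁, ∀ b ∈ A₀, a * b ∈ A₁
  mul_mem₁₁ : ∀ a ∈ A₁, ∀ b ∈ A₁, a * b ∈ A₀

namespace SuperAlgebra

variable {K A}

/-- The projection onto the even part along the odd part. -/
noncomputable def p₀ (S : SuperAlgebra K A) : A →ₗ[K] A :=
  S.A₀.subtype ∘ₗ Submodule.linearProjOfIsCompl S.A₀ S.A₁ S.compl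

/-- The projection onto the odd part along the even part. -/
noncomputable def p₁ (S : SuperAlgebra K A) : A →ₗ[K] A :=
  S.A₁.subtype ∘ₗ Submodule.linearProjOfIsCompl S.A₁ S.A₀ S.compl.symm

/-- The superflip `τ : A ⊗ A → A ⊗ A`, `a ⊗ b ↦ (-1)^{|a||b|} b ⊗ a` on homogeneous
elements. -/
noncomputable def τ (S : SuperAlgebra K A) : A ⊗[K] A →ₗ[K] A ⊗[K] A :=
  (TensorProduct.comm K A A).toLinearMap ∘ₗ
    (TensorProduct.map S.p₀ S.p₀ + TensorProduct.map S.p₀ S.p₁ +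
      TensorProduct.map S.p₁ S.p₀ - TensorProduct.map S.p₁ S.p₁)

variable (K A) in
/-- Regrouping `(A ⊗ A) ⊗ (A ⊗ A) ≃ A ⊗ ((A ⊗ A) ⊗ A)`. -/
noncomputable def rearr : ((A ⊗[K] A) ⊗[K] (A ⊗[K] A)) ≃ₗ[K] (A ⊗[K] ((A ⊗[K] A) ⊗[K] A)) :=
  (TensorProduct.assoc K A A (A ⊗[K] A)) ≪≫ₗ
    TensorProduct.congr (LinearEquiv.refl K A) (TensorProduct.assoc K A A A).symm

/-- The map `(μ ⊗ μ) ∘ (id ⊗ τ ⊗ id) : (A ⊗ A) ⊗ (A ⊗ A) → A ⊗ A`, i.e. the super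
multiplication of `A ⊗ A`. -/
noncomputable def superBimul (S : SuperAlgebra K A) :
    ((A ⊗[K] A) ⊗[K] (A ⊗[K] A)) →ₗ[K] A ⊗[K] A :=
  TensorProduct.map (LinearMap.mul' K A) (LinearMap.mul' K A) ∘ₗ
    (rearr K A).symm.toLinearMap ∘ₗ
    TensorProduct.map (LinearMap.id : A →ₗ[K] A)
      (TensorProduct.map S.τ (LinearMap.id : A →ₗ[K] A)) ∘ₗ
    (rearr K A).toLinearMap

/-- The even part of `A ⊗ A` for the total grading. -/
def evenTensor (S : SuperAlgebra K A) : Submodule K (A ⊗[K] A) :=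
  LinearMap.range (TensorProduct.map S.A₀.subtype S.A₀.subtype) ⊔
    LinearMap.range (TensorProduct.map S.A₁.subtype S.A₁.subtype)

/-- The odd part of `A ⊗ A` for the total grading. -/
def oddTensor (S : SuperAlgebra K A) : Submodule K (A ⊗[K] A) :=
  LinearMap.range (TensorProduct.map S.A₀.subtype S.A₁.subtype) ⊔
    LinearMap.range (TensorProduct.map S.A₁.subtype S.A₀.subtype)

end SuperAlgebra

/-- A superbialgebra over `K`: a superalgebra together with grading-preserving linear maps
`Δ : A → A ⊗ A` and `ε : A → K` satisfying coassociativity, counity, and compatibility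
with the (super)algebra structure. -/
structure SuperBialgebra extends SuperAlgebra K A where
  Δ : A →ₗ[K] A ⊗[K] A
  ε : A →ₗ[K] K
  Δ_even : ∀ a ∈ A₀, Δ a ∈ toSuperAlgebra.evenTensor
  Δ_odd : ∀ a ∈ A₁, Δ a ∈ toSuperAlgebra.oddTensor
  ε_odd : ∀ a ∈ A₁, ε a = 0
  coassoc : ∀ a : A,
    TensorProduct.assoc K A A A (TensorProduct.map Δ (LinearMap.id : A →ₗ[K] A) (Δ a)) =
      TensorProduct.map (LinearMap.id : A →ₗ[K] A) Δ (Δ a)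
  counit_left : ∀ a : A,
    TensorProduct.lid K A (TensorProduct.map ε (LinearMap.id : A →ₗ[K] A) (Δ a)) = a
  counit_right : ∀ a : A,
    TensorProduct.rid K A (TensorProduct.map (LinearMap.id : A →ₗ[K] A) ε (Δ a)) = a
  Δ_one : Δ 1 = 1 ⊗ₜ[K] 1
  ε_one : ε 1 = 1
  ε_mul : ∀ a b : A, ε (a * b) = ε a * ε b
  Δ_mul : ∀ a b : A, Δ (a * b) = toSuperAlgebra.superBimul (Δ a ⊗ₜ[K] Δ b)

/-- A Hopf superalgebra: a superbialgebra with a grading-preserving antipode `S`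
satisfying `μ ∘ (S ⊗ id) ∘ Δ = μ ∘ (id ⊗ S) ∘ Δ = η ∘ ε`. -/
structure HopfSuperalgebra extends SuperBialgebra K A where
  antipode : A →ₗ[K] A
  antipode_even : ∀ a ∈ A₀, antipode a ∈ A₀
  antipode_odd : ∀ a ∈ A₁, antipode a ∈ A₁
  antipode_left : ∀ a : A,
    LinearMap.mul' K A (TensorProduct.map antipode (LinearMap.id : A →ₗ[K] A) (Δ a)) =
      algebraMap K A (ε a)
  antipode_right : ∀ a : A,
    LinearMap.mul' K A (TensorProduct.map (LinearMap.id : A →ₗ[K] A) antipode (Δ a)) =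
      algebraMap K A (ε a)

end SuperDefs

/-!
If the odd part has dimension two, the even part is `K · 1`. Then odd elements are primitive, and a
product of two odd elements `u`, `v` is a multiple of `1` killed by the counit, so it vanishes.
Expanding `0 = Δ (u * v)` gives `u ⊗ v = v ⊗ u`, where the sign comes from the superflip, and so the
odd part is at most a line.

If the odd part has dimension one, choose `1, e` even and `x` odd with `ε e = 0`, and let `b` and
`β` be the coefficients of `x * x` at `e` and of `Δ e` at `x ⊗ x`. Associativity and `Δ (x * x)`
give `b * β = 0`. With the constants of `StructureConstants`, the antipode axiom for `e` then reads
`S(e) g = -e` with `g = 1 + α e`, which forces the eigenvalue `1 + α a` of `g` on `e` to be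
nonzero. The eigenvalue `c` of `e` on `x` is a root of `t² = a t`, and dually `γ` is a root of
`t² = α t`, so `1 + α c` and `1 + γ a` are nonzero too. But their product vanishes, by comparing
the coefficients of `e ⊗ x` in `Δ (e * x) = Δ e * Δ x`.
-/

section HopfSuperalgebras

variable {K A : Type*} [Field K] [Ring A] [Algebra K A]

namespace SuperAlgebra

variable (S : SuperAlgebra K A)

lemma p₀_of_mem_even {a : A} (ha : a ∈ S.A₀) : S.p₀ a = a :=
  Submodule.projection_apply_of_mem_left S.compl ha

lemma p₀_of_mem_odd {a : A} (ha : a ∈ S.A₁) : S.p₀ a = 0 :=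
  Submodule.projection_apply_of_mem_right S.compl ha

lemma p₁_of_mem_even {a : A} (ha : a ∈ S.A₀) : S.p₁ a = 0 :=
  Submodule.projection_apply_of_mem_right S.compl.symm ha

lemma p₁_of_mem_odd {a : A} (ha : a ∈ S.A₁) : S.p₁ a = a :=
  Submodule.projection_apply_of_mem_left S.compl.symm ha

lemma p₀_add_p₁ (a : A) : S.p₀ a + S.p₁ a = a :=
  Submodule.projection_add_projection_eq_self S.compl a

lemma superBimul_tmul_of_τ_tmul {a b c d : A} {k : K} (h : S.τ (b ⊗ₜ c) = k • c ⊗ₜ b) :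
    S.superBimul ((a ⊗ₜ b) ⊗ₜ (c ⊗ₜ d)) = k • (a * c) ⊗ₜ (b * d) := by
  simp [superBimul, rearr, h, smul_tmul']

lemma superBimul_tmul_of_left_mem_even (a : A) {b : A} (hb : b ∈ S.A₀) (c d : A) :
    S.superBimul ((a ⊗ₜ b) ⊗ₜ (c ⊗ₜ d)) = (a * c) ⊗ₜ (b * d) := by
  have hτ : S.τ (b ⊗ₜ c) = (1 : K) • c ⊗ₜ b := by
    simp [τ, S.p₀_of_mem_even hb, S.p₁_of_mem_even hb, ← add_tmul, S.p₀_add_p₁]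
  simpa using S.superBimul_tmul_of_τ_tmul hτ

lemma superBimul_tmul_of_right_mem_even (a b : A) {c : A} (hc : c ∈ S.A₀) (d : A) :
    S.superBimul ((a ⊗ₜ b) ⊗ₜ (c ⊗ₜ d)) = (a * c) ⊗ₜ (b * d) := by
  have hτ : S.τ (b ⊗ₜ c) = (1 : K) • c ⊗ₜ b := by
    simp [τ, S.p₀_of_mem_even hc, S.p₁_of_mem_even hc, ← tmul_add, S.p₀_add_p₁]
  simpa using S.superBimul_tmul_of_τ_tmul hτ

lemma superBimul_tmul_of_mem_odd (a : A) {b c : A} (hb : b ∈ S.A₁) (hc : c ∈ S.A₁) (d : A) :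
    S.superBimul ((a ⊗ₜ b) ⊗ₜ (c ⊗ₜ d)) = -((a * c) ⊗ₜ (b * d)) := by
  have hτ : S.τ (b ⊗ₜ c) = (-1 : K) • c ⊗ₜ b := by
    simp [τ, S.p₀_of_mem_odd hb, S.p₁_of_mem_odd hb, S.p₀_of_mem_odd hc, S.p₁_of_mem_odd hc]
  simpa using S.superBimul_tmul_of_τ_tmul hτ

lemma evenTensor_le {p : Submodule K (A ⊗[K] A)}
    (h₀₀ : ∀ a ∈ S.A₀, ∀ b ∈ S.A₀, a ⊗ₜ b ∈ p) (h₁₁ : ∀ a ∈ S.A₁, ∀ b ∈ S.A₁, a ⊗ₜ b ∈ p) :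
    S.evenTensor ≤ p := by
  rw [evenTensor, range_map_eq_span_tmul, range_map_eq_span_tmul]
  refine sup_le (Submodule.span_le.2 ?_) (Submodule.span_le.2 ?_)
  · rintro _ ⟨a, b, rfl⟩
    exact h₀₀ a a.2 b b.2
  · rintro _ ⟨a, b, rfl⟩
    exact h₁₁ a a.2 b b.2

lemma oddTensor_le {p : Submodule K (A ⊗[K] A)}
    (h₀₁ : ∀ a ∈ S.A₀, ∀ b ∈ S.A₁, a ⊗ₜ b ∈ p) (h₁₀ : ∀ a ∈ S.A₁, ∀ b ∈ S.A₀, a ⊗ₜ b ∈ p) :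
    S.oddTensor ≤ p := by
  rw [oddTensor, range_map_eq_span_tmul, range_map_eq_span_tmul]
  refine sup_le (Submodule.span_le.2 ?_) (Submodule.span_le.2 ?_)
  · rintro _ ⟨a, b, rfl⟩
    exact h₀₁ a a.2 b b.2
  · rintro _ ⟨a, b, rfl⟩
    exact h₁₀ a a.2 b b.2

end SuperAlgebra

namespace SuperBialgebra

protected lemma one_ne_zero (B : SuperBialgebra K A) : (1 : A) ≠ 0 :=
  fun h => by simpa [h] using B.ε_one

variable (B : SuperBialgebra K A)

lemma eq_counit_smul_one (hB : B.A₀ = K ∙ (1 : A)) {a : A} (ha : a ∈ B.A₀) :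
    a = B.ε a • 1 := by
  obtain ⟨k, rfl⟩ := Submodule.mem_span_singleton.1 (hB ▸ ha)
  simp [B.ε_one]

lemma comul_of_mem_odd (hB : B.A₀ = K ∙ (1 : A)) {a : A} (ha : a ∈ B.A₁) :
    B.Δ a = 1 ⊗ₜ a + a ⊗ₜ 1 := by
  let primitivePart : A ⊗[K] A →ₗ[K] A ⊗[K] A :=
    TensorProduct.mk K A A 1 ∘ₗ (TensorProduct.lid K A).toLinearMap ∘ₗ
        TensorProduct.map B.ε LinearMap.id +
      (TensorProduct.mk K A A).flip 1 ∘ₗ (TensorProduct.rid K A).toLinearMap ∘ₗ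
        TensorProduct.map LinearMap.id B.ε
  have hodd : B.oddTensor ≤ LinearMap.eqLocus LinearMap.id primitivePart := by
    refine B.oddTensor_le (fun u hu v hv => ?_) (fun u hu v hv => ?_)
    · simp only [LinearMap.mem_eqLocus]
      conv_lhs => rw [B.eq_counit_smul_one hB hu]
      simp [primitivePart, B.ε_odd v hv, smul_tmul]
    · simp only [LinearMap.mem_eqLocus]
      conv_lhs => rw [B.eq_counit_smul_one hB hv]
      simp [primitivePart, B.ε_odd u hu]
  simpa [primitivePart, B.counit_left, B.counit_right] using hodd (B.Δ_odd a ha)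

lemma mul_eq_zero_of_mem_odd (hB : B.A₀ = K ∙ (1 : A)) {a b : A} (ha : a ∈ B.A₁)
    (hb : b ∈ B.A₁) : a * b = 0 := by
  rw [B.eq_counit_smul_one hB (B.mul_mem₁₁ a ha b hb), B.ε_mul, B.ε_odd a ha, zero_mul, zero_smul]

lemma tmul_comm_of_mem_odd (hB : B.A₀ = K ∙ (1 : A)) {a b : A} (ha : a ∈ B.A₁)
    (hb : b ∈ B.A₁) : a ⊗ₜ[K] b = b ⊗ₜ a := by
  have hmul := B.Δ_mul a b
  simp only [B.mul_eq_zero_of_mem_odd hB ha hb, map_zero, B.comul_of_mem_odd hB ha,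
    B.comul_of_mem_odd hB hb, add_tmul, tmul_add, map_add] at hmul
  simp only [B.superBimul_tmul_of_left_mem_even _ B.one_mem,
    B.superBimul_tmul_of_right_mem_even _ _ B.one_mem,
    B.superBimul_tmul_of_mem_odd _ ha hb, B.mul_eq_zero_of_mem_odd hB ha hb,
    one_mul, mul_one, tmul_zero, zero_tmul] at hmul
  simpa [neg_tmul, add_neg_eq_zero] using hmul.symm

theorem finrank_odd_le_one (hB : B.A₀ = K ∙ (1 : A)) : Module.finrank K B.A₁ ≤ 1 := by
  rcases subsingleton_or_nontrivial B.A₁ with _ | _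
  · simp [Module.finrank_zero_of_subsingleton]
  · obtain ⟨x, hx⟩ := exists_ne (0 : B.A₁)
    obtain ⟨φ, hφ⟩ := Module.Projective.exists_dual_eq_one K (x := (x : A)) (by simpa using hx)
    refine finrank_le_one x fun y => ⟨φ y, Subtype.ext ?_⟩
    have hcontract := congr(TensorProduct.lid K A
      (TensorProduct.map φ LinearMap.id $(B.tmul_comm_of_mem_odd hB x.2 y.2)))
    simpa [hφ] using hcontract.symm

/-- A homogeneous basis `1, e, x` of a superbialgebra of dimension `2 | 1`, with `e` even in the
kernel of the counit and `x` odd. -/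
structure HomogeneousBasis where
  e : A
  x : A
  e_mem : e ∈ B.A₀
  x_mem : x ∈ B.A₁
  ε_e : B.ε e = 0
  basis : Module.Basis (Fin 3) K A
  coe_basis : ⇑basis = ![1, e, x]

lemma linearIndependent_one_even_odd {e x : A} (he : e ∈ B.A₀) (hx : x ∈ B.A₁)
    (hεe : B.ε e = 0) (he0 : e ≠ 0) (hx0 : x ≠ 0) : LinearIndependent K ![1, e, x] := by
  rw [Fintype.linearIndependent_iff]
  intro k hk
  simp only [Fin.sum_univ_three, Matrix.cons_val] at hk
  have hk₀ : k 0 = 0 := by simpa [B.ε_one, hεe, B.ε_odd x hx] using congr(B.ε $hk)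
  have hk₁ : k 1 = 0 := by
    simpa [hk₀, B.p₀_of_mem_even he, B.p₀_of_mem_odd hx, he0] using congr(B.p₀ $hk)
  have hk₂ : k 2 = 0 := by simpa [hk₀, hk₁, hx0] using hk
  exact fun i => by fin_cases i <;> assumption

lemma nonempty_homogeneousBasis (h₀ : Module.finrank K B.A₀ = 2)
    (h₁ : Module.finrank K B.A₁ = 1) : Nonempty B.HomogeneousBasis := by
  have : FiniteDimensional K B.A₀ := Module.finite_of_finrank_pos (by omega)
  have : FiniteDimensional K B.A₁ := Module.finite_of_finrank_pos (by omega)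
  have : FiniteDimensional K A :=
    Module.Finite.equiv (Submodule.prodEquivOfIsCompl B.A₀ B.A₁ B.compl)
  have hdim : Module.finrank K A = 3 := by
    rw [← Submodule.finrank_add_eq_of_isCompl B.compl, h₀, h₁]
  obtain ⟨e, hεe, he⟩ := Submodule.exists_mem_ne_zero_of_ne_bot <|
    LinearMap.ker_ne_bot_of_finrank_lt (f := B.ε ∘ₗ B.A₀.subtype) (by simp [h₀])
  obtain ⟨x, hx⟩ := Module.finrank_pos_iff_exists_ne_zero.1 (h₁ ▸ Nat.one_pos)
  have hli := B.linearIndependent_one_even_odd e.2 x.2 hεe (by simpa using he) (by simpa using hx)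
  exact ⟨⟨e, x, e.2, x.2, hεe, basisOfLinearIndependentOfCardEqFinrank hli (by simp [hdim]),
    by simp⟩⟩

namespace HomogeneousBasis

variable {B} (F : B.HomogeneousBasis)

@[simp] lemma basis_zero : F.basis 0 = 1 := by simp [F.coe_basis]

@[simp] lemma basis_one : F.basis 1 = F.e := by simp [F.coe_basis]

@[simp] lemma basis_two : F.basis 2 = F.x := by simp [F.coe_basis]

@[simp] lemma repr_one : F.basis.repr 1 = Finsupp.single 0 1 := by
  rw [← F.basis_zero, F.basis.repr_self]

@[simp] lemma repr_e : F.basis.repr F.e = Finsupp.single 1 1 := by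
  rw [← F.basis_one, F.basis.repr_self]

@[simp] lemma repr_x : F.basis.repr F.x = Finsupp.single 2 1 := by
  rw [← F.basis_two, F.basis.repr_self]

lemma coord_zero : F.basis.coord 0 = B.ε :=
  F.basis.ext fun i => by
    fin_cases i <;> simp [B.ε_one, F.ε_e, B.ε_odd _ F.x_mem]

lemma repr_zero (a : A) : F.basis.repr a 0 = B.ε a :=
  congr($F.coord_zero a)

lemma repr_one_of_mem_odd {a : A} (ha : a ∈ B.A₁) : F.basis.repr a 1 = 0 := by
  have hcoord : F.basis.coord 1 = F.basis.coord 1 ∘ₗ B.p₀ := F.basis.ext fun i => by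
    fin_cases i <;>
      simp [B.p₀_of_mem_even B.one_mem, B.p₀_of_mem_even F.e_mem, B.p₀_of_mem_odd F.x_mem]
  simpa [B.p₀_of_mem_odd ha] using congr($hcoord a)

lemma repr_two_of_mem_even {a : A} (ha : a ∈ B.A₀) : F.basis.repr a 2 = 0 := by
  have hcoord : F.basis.coord 2 = F.basis.coord 2 ∘ₗ B.p₁ := F.basis.ext fun i => by
    fin_cases i <;>
      simp [B.p₁_of_mem_even B.one_mem, B.p₁_of_mem_even F.e_mem, B.p₁_of_mem_odd F.x_mem]
  simpa [B.p₁_of_mem_even ha] using congr($hcoord a)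

lemma eq_repr_smul_e {a : A} (ha : a ∈ B.A₀) (hε : B.ε a = 0) : a = F.basis.repr a 1 • F.e :=
  F.basis.ext_elem fun i => by
    fin_cases i <;> simp [F.repr_zero, F.repr_two_of_mem_even ha, hε]

lemma eq_repr_smul_x {a : A} (ha : a ∈ B.A₁) : a = F.basis.repr a 2 • F.x :=
  F.basis.ext_elem fun i => by
    fin_cases i <;> simp [F.repr_zero, F.repr_one_of_mem_odd ha, B.ε_odd a ha]

/-- The coefficient at `basis i ⊗ basis j`, as a linear functional on `A ⊗ A`. -/
noncomputable def coeff (i j : Fin 3) : A ⊗[K] A →ₗ[K] K :=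
  (F.basis.tensorProduct F.basis).coord (i, j)

@[simp] lemma coeff_tmul (i j : Fin 3) (a b : A) :
    F.coeff i j (a ⊗ₜ b) = F.basis.repr a i * F.basis.repr b j := by
  simp [coeff, mul_comm]

lemma ext_coeff {z w : A ⊗[K] A} (h : ∀ i j, F.coeff i j z = F.coeff i j w) : z = w :=
  (F.basis.tensorProduct F.basis).ext_elem fun ⟨i, j⟩ => h i j

lemma coeff_zero_left_comul (j : Fin 3) (a : A) : F.coeff 0 j (B.Δ a) = F.basis.repr a j := by
  have hcoeff : F.coeff 0 j = F.basis.coord j ∘ₗ (TensorProduct.lid K A).toLinearMap ∘ₗ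
      TensorProduct.map B.ε LinearMap.id := by
    ext; simp [F.repr_zero]
  simp [hcoeff, B.counit_left]

lemma coeff_zero_right_comul (i : Fin 3) (a : A) : F.coeff i 0 (B.Δ a) = F.basis.repr a i := by
  have hcoeff : F.coeff i 0 = F.basis.coord i ∘ₗ (TensorProduct.rid K A).toLinearMap ∘ₗ
      TensorProduct.map LinearMap.id B.ε := by
    ext; simp [F.repr_zero, mul_comm]
  simp [hcoeff, B.counit_right]

lemma evenTensor_le_ker_coeff_one_two : B.evenTensor ≤ LinearMap.ker (F.coeff 1 2) :=
  B.evenTensor_le (fun a _ b hb => by simp [F.repr_two_of_mem_even hb])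
    fun a ha b _ => by simp [F.repr_one_of_mem_odd ha]

lemma evenTensor_le_ker_coeff_two_one : B.evenTensor ≤ LinearMap.ker (F.coeff 2 1) :=
  B.evenTensor_le (fun a ha b _ => by simp [F.repr_two_of_mem_even ha])
    fun a _ b hb => by simp [F.repr_one_of_mem_odd hb]

lemma oddTensor_le_ker_coeff_one_one : B.oddTensor ≤ LinearMap.ker (F.coeff 1 1) :=
  B.oddTensor_le (fun a _ b hb => by simp [F.repr_one_of_mem_odd hb])
    fun a ha b _ => by simp [F.repr_one_of_mem_odd ha]

lemma oddTensor_le_ker_coeff_two_two : B.oddTensor ≤ LinearMap.ker (F.coeff 2 2) :=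
  B.oddTensor_le (fun a ha b _ => by simp [F.repr_two_of_mem_even ha])
    fun a _ b hb => by simp [F.repr_two_of_mem_even hb]

lemma comul_e : B.Δ F.e = 1 ⊗ₜ F.e + F.e ⊗ₜ 1 + F.coeff 1 1 (B.Δ F.e) • F.e ⊗ₜ F.e +
    F.coeff 2 2 (B.Δ F.e) • F.x ⊗ₜ F.x := by
  refine F.ext_coeff fun i j => ?_
  have h₁₂ : F.coeff 1 2 (B.Δ F.e) = 0 := F.evenTensor_le_ker_coeff_one_two (B.Δ_even _ F.e_mem)
  have h₂₁ : F.coeff 2 1 (B.Δ F.e) = 0 := F.evenTensor_le_ker_coeff_two_one (B.Δ_even _ F.e_mem)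
  fin_cases i <;> fin_cases j <;>
    simp [F.coeff_zero_left_comul, F.coeff_zero_right_comul, h₁₂, h₂₁]

lemma comul_x : B.Δ F.x = 1 ⊗ₜ F.x + F.x ⊗ₜ 1 + F.coeff 1 2 (B.Δ F.x) • F.e ⊗ₜ F.x +
    F.coeff 2 1 (B.Δ F.x) • F.x ⊗ₜ F.e := by
  refine F.ext_coeff fun i j => ?_
  have h₁₁ : F.coeff 1 1 (B.Δ F.x) = 0 := F.oddTensor_le_ker_coeff_one_one (B.Δ_odd _ F.x_mem)
  have h₂₂ : F.coeff 2 2 (B.Δ F.x) = 0 := F.oddTensor_le_ker_coeff_two_two (B.Δ_odd _ F.x_mem)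
  fin_cases i <;> fin_cases j <;>
    simp [F.coeff_zero_left_comul, F.coeff_zero_right_comul, h₁₁, h₂₂]

/-- The structure constants of the multiplication (Latin letters) and of the comultiplication
(Greek letters) in a homogeneous basis. Up to sign conventions, passing to the dual superbialgebra
exchanges `a, b, c, d` with `α, β, γ, δ`. -/
structure StructureConstants where
  (a b c d α β γ δ : K)
  e_mul_e : F.e * F.e = a • F.e
  x_mul_x : F.x * F.x = b • F.e
  e_mul_x : F.e * F.x = c • F.x
  x_mul_e : F.x * F.e = d • F.x
  comul_e : B.Δ F.e = 1 ⊗ₜ F.e + F.e ⊗ₜ 1 + α • F.e ⊗ₜ F.e + β • F.x ⊗ₜ F.x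
  comul_x : B.Δ F.x = 1 ⊗ₜ F.x + F.x ⊗ₜ 1 + γ • F.e ⊗ₜ F.x + δ • F.x ⊗ₜ F.e

/-- The structure constants read off as coordinates of products and coproducts. -/
noncomputable def structureConstants : F.StructureConstants where
  a := F.basis.repr (F.e * F.e) 1
  b := F.basis.repr (F.x * F.x) 1
  c := F.basis.repr (F.e * F.x) 2
  d := F.basis.repr (F.x * F.e) 2
  α := F.coeff 1 1 (B.Δ F.e)
  β := F.coeff 2 2 (B.Δ F.e)
  γ := F.coeff 1 2 (B.Δ F.x)
  δ := F.coeff 2 1 (B.Δ F.x)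
  e_mul_e := F.eq_repr_smul_e (B.mul_mem₀₀ _ F.e_mem _ F.e_mem) (by simp [B.ε_mul, F.ε_e])
  x_mul_x := F.eq_repr_smul_e (B.mul_mem₁₁ _ F.x_mem _ F.x_mem)
    (by simp [B.ε_mul, B.ε_odd _ F.x_mem])
  e_mul_x := F.eq_repr_smul_x (B.mul_mem₀₁ _ F.e_mem _ F.x_mem)
  x_mul_e := F.eq_repr_smul_x (B.mul_mem₁₀ _ F.x_mem _ F.e_mem)
  comul_e := F.comul_e
  comul_x := F.comul_x

namespace StructureConstants

variable {F} (C : F.StructureConstants)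

lemma c_mul_c : C.c * C.c = C.a * C.c := by
  have hassoc := congr(F.basis.repr $(mul_assoc F.e F.e F.x) 2)
  simpa only [C.e_mul_e, C.e_mul_x, smul_mul_assoc, mul_smul_comm, smul_smul, map_smul,
    Finsupp.smul_apply, repr_x, Finsupp.single_eq_same, smul_eq_mul, mul_one] using hassoc.symm

lemma γ_mul_γ : C.γ * C.γ = C.α * C.γ := by
  let tripleCoeff := (F.basis.tensorProduct (F.basis.tensorProduct F.basis)).coord (1, 1, 2)
  calc
    C.γ * C.γ = tripleCoeff (TensorProduct.map LinearMap.id B.Δ (B.Δ F.x)) := by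
      simp [tripleCoeff, C.comul_x, C.comul_e, B.Δ_one, tmul_add, smul_tmul']
    _ = tripleCoeff (TensorProduct.assoc K A A A
        (TensorProduct.map B.Δ LinearMap.id (B.Δ F.x))) := by
      rw [B.coassoc]
    _ = C.α * C.γ := by
      simp [tripleCoeff, C.comul_x, C.comul_e, B.Δ_one, add_tmul, smul_tmul', mul_comm]

lemma b_mul_c : C.b * C.c = C.b * C.d := by
  have hassoc := congr(F.basis.repr $(mul_assoc F.x F.x F.x) 2)
  simpa only [C.x_mul_x, C.e_mul_x, C.x_mul_e, smul_mul_assoc, mul_smul_comm, smul_smul, map_smul,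
    Finsupp.smul_apply, repr_x, Finsupp.single_eq_same, smul_eq_mul, mul_one] using hassoc

lemma b_mul_β_eq : C.b * C.β = (C.γ - C.δ) * (C.d - C.c) :=
  calc
    C.b * C.β = F.coeff 2 2 (B.Δ (F.x * F.x)) := by simp [C.x_mul_x, C.comul_e]
    _ = F.coeff 2 2 (B.superBimul (B.Δ F.x ⊗ₜ B.Δ F.x)) := by rw [B.Δ_mul]
    _ = (C.γ - C.δ) * (C.d - C.c) := by
      simp [C.comul_x, C.e_mul_e, C.x_mul_x, C.e_mul_x, C.x_mul_e,
        add_tmul, tmul_add, tmul_smul, ← smul_tmul',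
        B.superBimul_tmul_of_left_mem_even, B.superBimul_tmul_of_right_mem_even,
        B.superBimul_tmul_of_mem_odd, B.one_mem, F.e_mem, F.x_mem]
      ring

lemma b_mul_β : C.b * C.β = 0 := by
  rcases eq_or_ne C.b 0 with hb | hb
  · rw [hb, zero_mul]
  · rw [C.b_mul_β_eq, mul_left_cancel₀ hb C.b_mul_c, sub_self, mul_zero]

lemma one_add_γ_mul_a_mul_one_add_α_mul_c : (1 + C.γ * C.a) * (1 + C.α * C.c) = 0 :=
  calc
    (1 + C.γ * C.a) * (1 + C.α * C.c) =
        F.coeff 1 2 (B.superBimul (B.Δ F.e ⊗ₜ B.Δ F.x)) - C.c * C.γ := by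
      simp [C.comul_e, C.comul_x, C.e_mul_e, C.x_mul_x, C.e_mul_x, C.x_mul_e,
        add_tmul, tmul_add, tmul_smul, ← smul_tmul',
        B.superBimul_tmul_of_left_mem_even, B.superBimul_tmul_of_right_mem_even,
        B.superBimul_tmul_of_mem_odd, B.one_mem, F.e_mem, F.x_mem]
      linear_combination (1 + C.δ * C.d) * C.b_mul_β
    _ = F.coeff 1 2 (B.Δ (F.e * F.x)) - C.c * C.γ := by rw [B.Δ_mul]
    _ = 0 := by simp [C.e_mul_x, C.comul_x]

end StructureConstants

end HomogeneousBasis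

end SuperBialgebra

namespace HopfSuperalgebra

variable (H : HopfSuperalgebra K A)

lemma antipode_one : H.antipode 1 = 1 := by
  simpa [H.Δ_one, H.ε_one] using H.antipode_left 1

variable {H} {F : H.HomogeneousBasis}

lemma one_add_α_mul_a_ne_zero (C : F.StructureConstants) : 1 + C.α * C.a ≠ 0 := by
  intro h
  have hx : C.β • (H.antipode F.x * F.x) = 0 := by
    rw [F.eq_repr_smul_x (H.antipode_odd _ F.x_mem), smul_mul_assoc, C.x_mul_x, smul_smul,
      smul_smul, mul_right_comm, mul_comm C.β, C.b_mul_β, zero_mul, zero_smul]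
  have hS : H.antipode F.e * (1 + C.α • F.e) = -F.e := by
    rw [eq_neg_iff_add_eq_zero, add_comm, mul_add, mul_one, mul_smul_comm, ← add_assoc]
    simpa [C.comul_e, H.antipode_one, F.ε_e, hx] using H.antipode_left F.e
  have hg : (1 + C.α • F.e) * F.e = 0 :=
    calc
      (1 + C.α • F.e) * F.e = (1 + C.α * C.a) • F.e := by
        rw [add_mul, one_mul, smul_mul_assoc, C.e_mul_e, smul_smul, add_smul, one_smul]
      _ = 0 := by rw [h, zero_smul]
  have he : F.e * F.e = 0 := by
    rw [← neg_eq_zero, ← neg_mul, ← hS, mul_assoc, hg, mul_zero]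
  have ha : C.a = 0 := by
    simpa [C.e_mul_e] using congr(F.basis.repr $he 1)
  simp [ha] at h

theorem not_finrank_two_one : ¬ (Module.finrank K H.A₀ = 2 ∧ Module.finrank K H.A₁ = 1) := by
  rintro ⟨h₀, h₁⟩
  obtain ⟨F⟩ := H.nonempty_homogeneousBasis h₀ h₁
  have C := F.structureConstants
  have hg := one_add_α_mul_a_ne_zero C
  have hγ : 1 + C.γ * C.a ≠ 0 := by
    rcases eq_or_ne C.γ 0 with h | h
    · simp [h]
    · rwa [mul_right_cancel₀ h C.γ_mul_γ]
  have hc : 1 + C.α * C.c ≠ 0 := by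
    rcases eq_or_ne C.c 0 with h | h
    · simp [h]
    · rwa [mul_right_cancel₀ h C.c_mul_c]
  exact mul_ne_zero hγ hc C.one_add_γ_mul_a_mul_one_add_α_mul_c

end HopfSuperalgebra
end HopfSuperalgebras

theorem no_nontrivial_three_dim_hopf_superalgebra_general
    {K A : Type*} [Field K] [Ring A] [Algebra K A]
    (H : HopfSuperalgebra K A) (hdim : Module.finrank K A = 3) : H.A₁ = ⊥ := by
  have : FiniteDimensional K A := Module.finite_of_finrank_pos (by omega)
  have hsum := Submodule.finrank_add_eq_of_isCompl H.compl
  have h₀ : 1 ≤ Module.finrank K H.A₀ :=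
    Submodule.one_le_finrank_iff.2 <| H.A₀.ne_bot_iff.2 ⟨1, H.one_mem, H.one_ne_zero⟩
  have h₁ : Module.finrank K H.A₁ ≠ 1 := fun h₁ => H.not_finrank_two_one ⟨by omega, h₁⟩
  have h₂ : Module.finrank K H.A₁ ≠ 2 := fun h₂ => by
    have hA₀ : H.A₀ = K ∙ (1 : A) := (Submodule.eq_of_le_of_finrank_eq
      ((Submodule.span_singleton_le_iff_mem 1 _).2 H.one_mem)
      (by rw [finrank_span_singleton H.one_ne_zero]; omega)).symm
    have := H.finrank_odd_le_one hA₀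
    omega
  exact Submodule.finrank_eq_zero.1 (by omega)

/-- there is no non-trivial 3-dimensional Hopf superalgebra: every
3-dimensional Hopf superalgebra has trivial odd part. -/
theorem no_nontrivial_three_dim_hopf_superalgebra
    {K A : Type*} [Field K] [IsAlgClosed K] [CharZero K] [Ring A] [Algebra K A]
    (H : HopfSuperalgebra K A)
    (hdim : Module.finrank K A = 3) :
    H.A₁ = ⊥ :=
  no_nontrivial_three_dim_hopf_superalgebra_general H hdim
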